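/- Let Y^n ~ N_n(0, I_n) and for τ ≥ 1/n set H_n(τ) = Σ_{i=1}^n var(θ_i | τ, Y_i), the posterior expected squared distance E(‖θ − θ̂(τ)‖₂² | τ, Y^n) under the horseshoe posterior. Then for any C > 0, as τ → 0, sup_{t ∈ [C^{-1}τ, Cτ]} (nτζ_τ)^{-1} | H_n(t) − E_0 H_n(t) | → 0 in probability. -/

import Mathlib

open MeasureTheory ProbabilityTheory Filter Set Real Asymptotics
open scoped ENNReal NNReal BigOperators

noncomputable section

/-- Standard normal density `φ`. -/
def phiN (x : ℝ) : ℝ := (Real.sqrt (2 * Real.pi))⁻¹ * Real.exp (-(x ^ 2) / 2)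

/-- Horseshoe prior density with global parameter `τ`. -/
def gHS (τ θ : ℝ) : ℝ :=
  ∫ l in Set.Ioi (0 : ℝ), phiN (θ / (l * τ)) / (l * τ) * (2 / (Real.pi * (1 + l ^ 2)))

/-- Unnormalised marginal posterior density of `θᵢ` given `Yᵢ = y` (parameter `τ`). -/
def postDens (τ y θ : ℝ) : ℝ := phiN (y - θ) * gHS τ θ

/-- Bayesian marginal density `ψ_τ(y)` of one observation. -/
def margDens (τ y : ℝ) : ℝ := ∫ θ, postDens τ y θ

/-- Marginal posterior probability `Π(θᵢ ∈ A | Yᵢ = y, τ)`. -/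
def postProb (τ y : ℝ) (A : Set ℝ) : ℝ := (∫ θ in A, postDens τ y θ) / margDens τ y

/-- Marginal posterior mean `θ̂ᵢ(τ)`. -/
def postMean (τ y : ℝ) : ℝ := (∫ θ, θ * postDens τ y θ) / margDens τ y

/-- Marginal posterior variance. -/
def postVar (τ y : ℝ) : ℝ :=
  (∫ θ, (θ - postMean τ y) ^ 2 * postDens τ y θ) / margDens τ y

/-- Marginal posterior fourth central moment. -/
def postMom4 (τ y : ℝ) : ℝ :=
  (∫ θ, (θ - postMean τ y) ^ 4 * postDens τ y θ) / margDens τ y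

/-- `ζ_τ = √(2 log (1/τ))`. -/
def zet (τ : ℝ) : ℝ := Real.sqrt (2 * Real.log (1 / τ))

/-- `τ_n(p) = (p/n) √(log (n/p))`. -/
def tauOpt (n p : ℕ) : ℝ := ((p : ℝ) / (n : ℝ)) * Real.sqrt (Real.log ((n : ℝ) / (p : ℝ)))

/-- The law `P_{θ₀}` of `Y^n`. -/
def Pdata {n : ℕ} (θ₀ : Fin n → ℝ) : Measure (Fin n → ℝ) :=
  Measure.pi fun i => gaussianReal (θ₀ i) 1

/-- The standard normal upper `α`-quantile `z_α`. -/
def zquant (α : ℝ) : ℝ := sInf {z : ℝ | ((gaussianReal 0 1) (Set.Ioi z)).toReal ≤ α}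

/-- Nearly black vectors `ℓ₀[p]`. -/
def nearlyBlack (n p : ℕ) : Set (Fin n → ℝ) :=
  {θ | ({i | θ i ≠ 0} : Set (Fin n)).ncard ≤ p}

/-- Unnormalised posterior density of the full vector `θ` given `Y^n = y` and `τ`. -/
def fullDens {n : ℕ} (τ : ℝ) (y θ : Fin n → ℝ) : ℝ := ∏ i, postDens τ (y i) (θ i)

/-- Posterior probability `Π(θ ∈ A | Y^n = y, τ)` of a set of vectors. -/
def fullPostProb {n : ℕ} (τ : ℝ) (y : Fin n → ℝ) (A : Set (Fin n → ℝ)) : ℝ :=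
  (∫ θ in A, fullDens τ y θ) / ∫ θ, fullDens τ y θ

/-- Posterior mean of the full vector (coordinatewise, by conditional independence). -/
def fullPostMean {n : ℕ} (τ : ℝ) (y : Fin n → ℝ) : Fin n → ℝ := fun i => postMean τ (y i)

/-- Euclidean distance on `ℝⁿ`. -/
def l2dist {n : ℕ} (a b : Fin n → ℝ) : ℝ := Real.sqrt (∑ i, (a i - b i) ^ 2)

/-- Marginal likelihood of `τ`. -/
def lik {n : ℕ} (τ : ℝ) (y : Fin n → ℝ) : ℝ := ∏ i, margDens τ (y i)

/-- Unnormalised hierarchical posterior weight of `τ` given the data. -/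
def hierWeight {n : ℕ} (pr : ℝ → ℝ) (y : Fin n → ℝ) (τ : ℝ) : ℝ := pr τ * lik τ y

/-- Hierarchical posterior distribution of `τ`. -/
def hierTauProb {n : ℕ} (pr : ℝ → ℝ) (y : Fin n → ℝ) (A : Set ℝ) : ℝ :=
  (∫ τ in A, hierWeight pr y τ) / ∫ τ, hierWeight pr y τ

/-- Hierarchical marginal posterior probability for coordinate `i`. -/
def hierPostProb {n : ℕ} (pr : ℝ → ℝ) (y : Fin n → ℝ) (i : Fin n) (A : Set ℝ) : ℝ :=
  (∫ τ, hierWeight pr y τ * postProb τ (y i) A) / ∫ τ, hierWeight pr y τ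

/-- Hierarchical marginal posterior mean for coordinate `i`. -/
def hierPostMean {n : ℕ} (pr : ℝ → ℝ) (y : Fin n → ℝ) (i : Fin n) : ℝ :=
  (∫ τ, hierWeight pr y τ * postMean τ (y i)) / ∫ τ, hierWeight pr y τ

/-- Hierarchical posterior probability of a set of vectors. -/
def hierFullPostProb {n : ℕ} (pr : ℝ → ℝ) (y : Fin n → ℝ) (A : Set (Fin n → ℝ)) : ℝ :=
  (∫ τ, pr τ * ∫ θ in A, fullDens τ y θ) / ∫ τ, pr τ * ∫ θ, fullDens τ y θ

/-- Hierarchical posterior mean vector. -/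
def hierFullPostMean {n : ℕ} (pr : ℝ → ℝ) (y : Fin n → ℝ) : Fin n → ℝ :=
  fun i => hierPostMean pr y i

/-- The functions `I_k`. -/
def Ik (τ k y : ℝ) : ℝ :=
  ∫ z in Set.Ioc (0 : ℝ) 1, z ^ k * (τ ^ 2 + (1 - τ ^ 2) * z)⁻¹ * Real.exp (y ^ 2 * z / 2)

/-- The function `m_τ`. -/
def mHS (τ y : ℝ) : ℝ :=
  y ^ 2 * ((Ik τ (1 / 2) y - Ik τ (3 / 2) y) / Ik τ (-(1 / 2)) y) -
    Ik τ (1 / 2) y / Ik τ (-(1 / 2)) y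

/-- The excessive-bias restriction with witness `q`. -/
def EBRwith (n : ℕ) (A Cs C : ℝ) (θ : Fin n → ℝ) (q : ℕ) : Prop :=
  1 ≤ q ∧
    (∑ i, if |θ i| < A * Real.sqrt (2 * Real.log ((n : ℝ) / (q : ℝ))) then (θ i) ^ 2 else 0)
        ≤ C * (q : ℝ) * Real.log ((n : ℝ) / (q : ℝ)) ∧
    (q : ℝ) / Cs ≤
      (({i | A * Real.sqrt (2 * Real.log ((n : ℝ) / (q : ℝ))) ≤ |θ i|} : Set (Fin n)).ncard : ℝ)

/-- The excessive-bias restriction. -/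
def EBR (n : ℕ) (A Cs C : ℝ) (θ : Fin n → ℝ) : Prop := ∃ q, EBRwith n A Cs C θ q

/-- The class `Θ[p]`. -/
def ThetaClass (n p : ℕ) (A Cs C : ℝ) : Set (Fin n → ℝ) :=
  {θ | θ ∈ nearlyBlack n p ∧ EBR n A Cs C θ}

/-- Smallest witness `q` in the excessive-bias restriction. -/
def qmin (n : ℕ) (A Cs C : ℝ) (θ : Fin n → ℝ) : ℕ := sInf {q | EBRwith n A Cs C θ q}

/-- `p̃(θ₀)`: the number of coordinates above threshold for the smallest witness `q`. -/
def ptilde (n : ℕ) (A Cs C : ℝ) (θ : Fin n → ℝ) : ℕ :=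
  ({i | A * Real.sqrt (2 * Real.log ((n : ℝ) / (qmin n A Cs C θ : ℝ))) ≤ |θ i|} :
    Set (Fin n)).ncard

/-!
The half-Cauchy densities with scales `s` and `t` differ by a factor of at most `r` when
`s ≤ r * t` and `t ≤ r * s`, hence so do the two priors, and the posterior variances differ by a
factor of at most `r ^ 2`. The supremum over `[a * τ, b * τ]` therefore reduces to a multiplicative
net whose cardinality depends on neither `n` nor `τ`. At a point `t` of the net, Chebyshev's
inequality and the bound `E v² ≲ τ * zet τ` for a single posterior variance `v` bound the
probability of a deviation by a multiple of `1 / (n * τ * zet τ)`. The moment bound comes from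
`v y ≲ τ * exp (y ^ 2 / 2)` on an interval `[-T, T]` and `v y ≲ 1 + y ^ 2` outside it.
-/

lemma phiN_eq_gaussianPDFReal : phiN = gaussianPDFReal 0 1 := by
  ext x
  simp [phiN, gaussianPDFReal]

lemma phiN_pos (x : ℝ) : 0 < phiN x := by
  unfold phiN
  positivity

lemma continuous_phiN : Continuous phiN := by
  unfold phiN
  fun_prop

lemma phiN_neg (x : ℝ) : phiN (-x) = phiN x := by
  simp only [phiN, neg_sq]

lemma phiN_le_of_abs_le {x y : ℝ} (h : |x| ≤ |y|) : phiN y ≤ phiN x := by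
  unfold phiN
  have := sq_le_sq.2 h
  gcongr

lemma phiN_le_exp (x : ℝ) : phiN x ≤ exp (-(x ^ 2) / 2) := by
  refine mul_le_of_le_one_left (exp_pos _).le (inv_le_one_of_one_le₀ ?_)
  rw [one_le_sqrt]
  nlinarith [pi_gt_three]

lemma phiN_mul_sq_le_one (x : ℝ) : phiN x * (1 + x ^ 2 / 4) ^ 2 ≤ 1 := by
  have hexp : exp (-(x ^ 2) / 2) * exp (x ^ 2 / 4) ^ 2 = 1 := by
    rw [← exp_nat_mul, ← exp_add, exp_eq_one_iff]
    push_cast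
    ring
  calc phiN x * (1 + x ^ 2 / 4) ^ 2
      ≤ exp (-(x ^ 2) / 2) * exp (x ^ 2 / 4) ^ 2 := by
        gcongr
        · exact phiN_le_exp x
        · linarith [add_one_le_exp (x ^ 2 / 4)]
    _ = 1 := hexp

lemma phiN_le_one (x : ℝ) : phiN x ≤ 1 := by
  nlinarith [phiN_mul_sq_le_one x, phiN_pos x, mul_nonneg (phiN_pos x).le (sq_nonneg x),
    mul_nonneg (phiN_pos x).le (sq_nonneg (x ^ 2))]

lemma sq_mul_phiN_le_two (x : ℝ) : x ^ 2 * phiN x ≤ 2 := by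
  nlinarith [phiN_mul_sq_le_one x, phiN_pos x, mul_nonneg (phiN_pos x).le (sq_nonneg (x ^ 2))]

lemma abs_mul_phiN_le_one (x : ℝ) : |x| * phiN x ≤ 1 := by
  have habs : |x| ≤ (1 + x ^ 2 / 4) ^ 2 := by
    nlinarith [sq_abs x, sq_nonneg (|x| - 1), sq_nonneg (x ^ 2)]
  calc |x| * phiN x ≤ (1 + x ^ 2 / 4) ^ 2 * phiN x := by
        gcongr
        exact (phiN_pos x).le
    _ ≤ 1 := by
        rw [mul_comm]
        exact phiN_mul_sq_le_one x

lemma integrable_phiN : Integrable phiN := by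
  rw [phiN_eq_gaussianPDFReal]
  exact integrable_gaussianPDFReal 0 1

lemma integral_phiN : ∫ x, phiN x = 1 := by
  rw [phiN_eq_gaussianPDFReal]
  exact integral_gaussianPDFReal_eq_one 0 one_ne_zero

lemma integral_gaussianReal_eq_integral_phiN_mul (f : ℝ → ℝ) :
    ∫ x, f x ∂gaussianReal 0 1 = ∫ x, phiN x * f x := by
  simp only [integral_gaussianReal_eq_integral_smul one_ne_zero, phiN_eq_gaussianPDFReal,
    smul_eq_mul]

lemma integrable_sq_mul_phiN : Integrable fun x => x ^ 2 * phiN x := by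
  have h := (integrable_rpow_mul_exp_neg_mul_sq (b := 1 / 2) (s := 2) (by norm_num)
    (by norm_num)).const_mul (√(2 * π))⁻¹
  refine h.congr (Eventually.of_forall fun x => ?_)
  simp only [phiN, rpow_two, show -(1 / 2) * x ^ 2 = -(x ^ 2) / 2 by ring]
  ring

lemma integral_sq_mul_phiN : ∫ x, x ^ 2 * phiN x = 1 := by
  have hvar : Var[id; gaussianReal 0 1] = 1 := by
    simp [variance_id_gaussianReal]
  rw [variance_eq_integral measurable_id.aemeasurable] at hvar
  simpa only [id_eq, integral_id_gaussianReal, sub_zero,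
    integral_gaussianReal_eq_integral_phiN_mul, mul_comm] using hvar

/-- The density at `θ` of the scale mixture `∫ N(0, s²) p(s) ds` of centred normals with mixing
density `p` on `(0, ∞)`. At `θ = 0` the integral may diverge, in which case the value is `0`. -/
def normalScaleMixture (p : ℝ → ℝ) (θ : ℝ) : ℝ := ∫ s in Ioi 0, phiN (θ / s) / s * p s

section NormalScaleMixture

variable {p q : ℝ → ℝ} {θ θ' r : ℝ}

lemma measurable_phiN_div_mul (hpm : Measurable p) :
    Measurable fun x : ℝ × ℝ => phiN (x.1 / x.2) / x.2 * p x.2 := by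
  have := continuous_phiN.measurable
  fun_prop

lemma phiN_div_mul_nonneg (hp : ∀ s > 0, 0 ≤ p s) (θ : ℝ) {s : ℝ} (hs : 0 < s) :
    0 ≤ phiN (θ / s) / s * p s :=
  mul_nonneg (div_nonneg (phiN_pos _).le hs.le) (hp s hs)

lemma phiN_div_le_inv_abs (hθ : θ ≠ 0) {s : ℝ} (hs : 0 < s) : phiN (θ / s) / s ≤ |θ|⁻¹ := by
  have h := abs_mul_phiN_le_one (θ / s)
  rw [abs_div, abs_of_pos hs] at h
  rw [← one_div, le_div_iff₀ (abs_pos.2 hθ)]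
  calc phiN (θ / s) / s * |θ| = |θ| / s * phiN (θ / s) := by ring
    _ ≤ 1 := h

lemma integrableOn_phiN_div_mul (hp : IntegrableOn p (Ioi 0)) (hθ : θ ≠ 0) :
    IntegrableOn (fun s => phiN (θ / s) / s * p s) (Ioi 0) := by
  have hm : Measurable fun s => phiN (θ / s) / s := by
    have := continuous_phiN.measurable
    fun_prop
  refine Integrable.bdd_mul hp hm.aestronglyMeasurable (c := |θ|⁻¹) ?_
  filter_upwards [ae_restrict_mem measurableSet_Ioi] with s (hs : 0 < s)
  rw [norm_of_nonneg (div_nonneg (phiN_pos _).le hs.le)]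
  exact phiN_div_le_inv_abs hθ hs

lemma normalScaleMixture_nonneg (hp : ∀ s > 0, 0 ≤ p s) (θ : ℝ) :
    0 ≤ normalScaleMixture p θ :=
  setIntegral_nonneg measurableSet_Ioi fun _ hs => phiN_div_mul_nonneg hp θ hs

lemma normalScaleMixture_pos (hp : ∀ s > 0, 0 < p s) (hpi : IntegrableOn p (Ioi 0))
    (hθ : θ ≠ 0) : 0 < normalScaleMixture p θ := by
  have hpos : ∀ s ∈ Ioi (0 : ℝ), 0 < phiN (θ / s) / s * p s := fun s hs =>
    mul_pos (div_pos (phiN_pos _) hs) (hp s hs)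
  have hsupp : Ioi 0 ⊆ Function.support fun s => phiN (θ / s) / s * p s := fun s hs =>
    (hpos s hs).ne'
  rw [normalScaleMixture, setIntegral_pos_iff_support_of_nonneg_ae
    (ae_restrict_of_forall_mem measurableSet_Ioi fun s hs => (hpos s hs).le)
    (integrableOn_phiN_div_mul hpi hθ), inter_eq_right.2 hsupp, volume_Ioi]
  exact ENNReal.zero_lt_top

lemma normalScaleMixture_le_of_abs_le (hp : ∀ s > 0, 0 ≤ p s) (hpi : IntegrableOn p (Ioi 0))
    (hθ : θ ≠ 0) (h : |θ| ≤ |θ'|) : normalScaleMixture p θ' ≤ normalScaleMixture p θ := by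
  have hθ' : θ' ≠ 0 := abs_pos.1 ((abs_pos.2 hθ).trans_le h)
  refine setIntegral_mono_on (integrableOn_phiN_div_mul hpi hθ')
    (integrableOn_phiN_div_mul hpi hθ) measurableSet_Ioi fun s (hs : 0 < s) => ?_
  have hφ : phiN (θ' / s) ≤ phiN (θ / s) := by
    apply phiN_le_of_abs_le
    rw [abs_div, abs_div]
    gcongr
  have := hp s hs
  gcongr

lemma normalScaleMixture_le_mul (hpi : IntegrableOn p (Ioi 0)) (hqi : IntegrableOn q (Ioi 0))
    (hpq : ∀ s > 0, p s ≤ r * q s) (hθ : θ ≠ 0) :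
    normalScaleMixture p θ ≤ r * normalScaleMixture q θ := by
  unfold normalScaleMixture
  rw [← integral_const_mul]
  refine setIntegral_mono_on (integrableOn_phiN_div_mul hpi hθ)
    ((integrableOn_phiN_div_mul hqi hθ).const_mul r) measurableSet_Ioi fun s (hs : 0 < s) => ?_
  rw [mul_left_comm]
  exact mul_le_mul_of_nonneg_left (hpq s hs) (div_nonneg (phiN_pos _).le hs.le)

lemma measurable_normalScaleMixture (hpm : Measurable p) :
    Measurable (normalScaleMixture p) :=
  ((measurable_phiN_div_mul hpm).stronglyMeasurable.integral_prod_right).measurable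

lemma integrable_normalScaleMixture (hpm : Measurable p) (hp : ∀ s > 0, 0 ≤ p s)
    (hpi : IntegrableOn p (Ioi 0)) : Integrable (normalScaleMixture p) := by
  suffices h : Integrable (fun x : ℝ × ℝ => phiN (x.1 / x.2) / x.2 * p x.2)
      (volume.prod (volume.restrict (Ioi 0))) from h.integral_prod_left
  rw [integrable_prod_iff' (measurable_phiN_div_mul hpm).aestronglyMeasurable]
  constructor
  · filter_upwards [ae_restrict_mem measurableSet_Ioi] with s (hs : 0 < s)
    exact ((integrable_phiN.comp_div hs.ne').div_const s).mul_const (p s)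
  · refine hpi.congr ?_
    filter_upwards [ae_restrict_mem measurableSet_Ioi] with s (hs : 0 < s)
    simp_rw [norm_of_nonneg (phiN_div_mul_nonneg hp _ hs)]
    rw [integral_mul_const, integral_div, Measure.integral_comp_div phiN, integral_phiN,
      abs_of_pos hs, smul_eq_mul, mul_one, div_self hs.ne', one_mul]

lemma integrableOn_and_integral_Ioi_div_sq_add_sq {b : ℝ} (hb : 0 < b) :
    IntegrableOn (fun s => s / (s ^ 2 + b) ^ 2) (Ioi 0) ∧
      ∫ s in Ioi 0, s / (s ^ 2 + b) ^ 2 = (2 * b)⁻¹ := by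
  have hne (s : ℝ) : s ^ 2 + b ≠ 0 := by positivity
  have hderiv : ∀ s ∈ Ioi (0 : ℝ),
      HasDerivAt (fun s => -(2 * (s ^ 2 + b))⁻¹) (s / (s ^ 2 + b) ^ 2) s := by
    intro s _
    have h := ((((hasDerivAt_pow 2 s).add_const b).const_mul 2).fun_inv (by simp [hne s])).neg
    refine h.congr_deriv ?_
    have := hne s
    field_simp
    simp
  have hcont : ContinuousWithinAt (fun s => -(2 * (s ^ 2 + b))⁻¹) (Ici 0) 0 := by
    refine Continuous.continuousWithinAt ?_
    fun_prop (disch := simp [hne])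
  have hnonneg : ∀ s ∈ Ioi (0 : ℝ), 0 ≤ s / (s ^ 2 + b) ^ 2 := fun s (hs : 0 < s) => by positivity
  have hlim : Tendsto (fun s : ℝ => -(2 * (s ^ 2 + b))⁻¹) atTop (nhds 0) := by
    have h : Tendsto (fun s : ℝ => 2 * (s ^ 2 + b)) atTop atTop :=
      (tendsto_atTop_add_const_right _ _ (tendsto_pow_atTop two_ne_zero)).const_mul_atTop two_pos
    simpa using h.inv_tendsto_atTop.neg
  refine ⟨integrableOn_Ioi_deriv_of_nonneg hcont hderiv hnonneg hlim, ?_⟩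
  rw [integral_Ioi_of_hasDerivAt_of_nonneg hcont hderiv hnonneg hlim]
  simp

lemma normalScaleMixture_le_div_sq {A : ℝ} (hp : ∀ s > 0, 0 ≤ p s)
    (hpi : IntegrableOn p (Ioi 0)) (hpA : ∀ s > 0, p s ≤ A / s ^ 2) (hθ : θ ≠ 0) :
    normalScaleMixture p θ ≤ 2 * A / θ ^ 2 := by
  obtain ⟨hint, hval⟩ := integrableOn_and_integral_Ioi_div_sq_add_sq (b := θ ^ 2 / 4)
    (by positivity)
  calc normalScaleMixture p θ ≤ ∫ s in Ioi 0, A * (s / (s ^ 2 + θ ^ 2 / 4) ^ 2) := by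
        refine setIntegral_mono_on (integrableOn_phiN_div_mul hpi hθ) (hint.const_mul A)
          measurableSet_Ioi fun s (hs : 0 < s) => ?_
        have hφ : phiN (θ / s) ≤ 1 / (1 + (θ / s) ^ 2 / 4) ^ 2 := by
          rw [le_div_iff₀ (by positivity)]
          exact phiN_mul_sq_le_one (θ / s)
        have := hp s hs
        calc phiN (θ / s) / s * p s
            ≤ 1 / (1 + (θ / s) ^ 2 / 4) ^ 2 / s * (A / s ^ 2) := by
              gcongr
              exact hpA s hs
          _ = A * (s / (s ^ 2 + θ ^ 2 / 4) ^ 2) := by field_simp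
    _ = 2 * A / θ ^ 2 := by
        rw [integral_const_mul, hval]
        field_simp
        norm_num

end NormalScaleMixture

/-- The density at `s > 0` of the half-Cauchy distribution with scale `t`. -/
def halfCauchyPDF (t s : ℝ) : ℝ := 2 / π * (t / (t ^ 2 + s ^ 2))

section Horseshoe

variable {t t' r : ℝ}

lemma halfCauchyPDF_pos (ht : 0 < t) (s : ℝ) : 0 < halfCauchyPDF t s := by
  unfold halfCauchyPDF
  positivity

lemma measurable_halfCauchyPDF (t : ℝ) : Measurable (halfCauchyPDF t) := by
  unfold halfCauchyPDF
  fun_prop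

lemma integrable_halfCauchyPDF (ht : 0 < t) : Integrable (halfCauchyPDF t) := by
  refine ((integrable_inv_one_add_sq.comp_div ht.ne').const_mul (2 / (π * t))).congr
    (Eventually.of_forall fun s => ?_)
  simp only [halfCauchyPDF]
  field_simp

lemma halfCauchyPDF_le_mul (ht : 0 < t) (ht' : 0 < t') (h : t ≤ r * t') (h' : t' ≤ r * t)
    (s : ℝ) : halfCauchyPDF t s ≤ r * halfCauchyPDF t' s := by
  have key : t / (t ^ 2 + s ^ 2) ≤ r * (t' / (t' ^ 2 + s ^ 2)) := by
    rw [← mul_div_assoc, div_le_div_iff₀ (by positivity) (by positivity)]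
    nlinarith [mul_le_mul_of_nonneg_right h (sq_nonneg s),
      mul_le_mul_of_nonneg_left h' (mul_pos ht ht').le]
  unfold halfCauchyPDF
  rw [mul_left_comm]
  gcongr

lemma halfCauchyPDF_le_div_sq (ht : 0 < t) {s : ℝ} (hs : 0 < s) :
    halfCauchyPDF t s ≤ t / s ^ 2 := by
  have hπ : 2 / π ≤ 1 := (div_le_one pi_pos).2 (by linarith [pi_gt_three])
  calc 2 / π * (t / (t ^ 2 + s ^ 2)) ≤ 1 * (t / s ^ 2) := by
        gcongr
        nlinarith
    _ = t / s ^ 2 := one_mul _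

lemma gHS_eq_normalScaleMixture (ht : 0 < t) :
    gHS t = normalScaleMixture (halfCauchyPDF t) := by
  ext θ
  have hsubst := integral_comp_mul_right_Ioi
    (fun s => phiN (θ / s) / s * halfCauchyPDF t s) 0 ht
  rw [zero_mul, smul_eq_mul, eq_comm, inv_mul_eq_iff_eq_mul₀ ht.ne'] at hsubst
  rw [normalScaleMixture, hsubst, gHS, ← integral_const_mul]
  refine setIntegral_congr_fun measurableSet_Ioi fun l (hl : 0 < l) => ?_
  simp only [halfCauchyPDF]
  field_simp

lemma gHS_eq_inv_mul_gHS_one (t θ : ℝ) : gHS t θ = t⁻¹ * gHS 1 (θ / t) := by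
  simp only [gHS, mul_one, ← integral_const_mul]
  congr 1
  ext l
  rw [div_div, mul_comm t l]
  ring

lemma gHS_neg (t θ : ℝ) : gHS t (-θ) = gHS t θ := by
  simp only [gHS, neg_div, phiN_neg]

lemma gHS_nonneg (ht : 0 < t) (θ : ℝ) : 0 ≤ gHS t θ := by
  rw [gHS_eq_normalScaleMixture ht]
  exact normalScaleMixture_nonneg (fun s _ => (halfCauchyPDF_pos ht s).le) θ

lemma gHS_pos (ht : 0 < t) {θ : ℝ} (hθ : θ ≠ 0) : 0 < gHS t θ := by
  rw [gHS_eq_normalScaleMixture ht]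
  exact normalScaleMixture_pos (fun s _ => halfCauchyPDF_pos ht s)
    (integrable_halfCauchyPDF ht).integrableOn hθ

lemma measurable_gHS (ht : 0 < t) : Measurable (gHS t) := by
  rw [gHS_eq_normalScaleMixture ht]
  exact measurable_normalScaleMixture (measurable_halfCauchyPDF t)

lemma integrable_gHS (ht : 0 < t) : Integrable (gHS t) := by
  rw [gHS_eq_normalScaleMixture ht]
  exact integrable_normalScaleMixture (measurable_halfCauchyPDF t)
    (fun s _ => (halfCauchyPDF_pos ht s).le) (integrable_halfCauchyPDF ht).integrableOn

lemma gHS_le_of_abs_le (ht : 0 < t) {θ θ' : ℝ} (hθ : θ ≠ 0) (h : |θ| ≤ |θ'|) :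
    gHS t θ' ≤ gHS t θ := by
  rw [gHS_eq_normalScaleMixture ht]
  exact normalScaleMixture_le_of_abs_le (fun s _ => (halfCauchyPDF_pos ht s).le)
    (integrable_halfCauchyPDF ht).integrableOn hθ h

lemma gHS_le_mul (ht : 0 < t) (ht' : 0 < t') (h : t ≤ r * t') (h' : t' ≤ r * t) {θ : ℝ}
    (hθ : θ ≠ 0) : gHS t θ ≤ r * gHS t' θ := by
  rw [gHS_eq_normalScaleMixture ht, gHS_eq_normalScaleMixture ht']
  exact normalScaleMixture_le_mul (integrable_halfCauchyPDF ht).integrableOn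
    (integrable_halfCauchyPDF ht').integrableOn
    (fun s _ => halfCauchyPDF_le_mul ht ht' h h' s) hθ

lemma gHS_le_div_sq (ht : 0 < t) {θ : ℝ} (hθ : θ ≠ 0) : gHS t θ ≤ 2 * t / θ ^ 2 := by
  rw [gHS_eq_normalScaleMixture ht]
  exact normalScaleMixture_le_div_sq (fun s _ => (halfCauchyPDF_pos ht s).le)
    (integrable_halfCauchyPDF ht).integrableOn (fun s hs => halfCauchyPDF_le_div_sq ht hs) hθ

end Horseshoe

lemma ae_ne_zero : ∀ᵐ θ : ℝ, θ ≠ 0 := by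
  simp only [ne_eq, ae_iff, not_not, ofPred_eq_eq_singleton, measure_singleton]

section WeightedMean

variable {w : ℝ → ℝ}

lemma integral_sub_sq_mul (hw : Integrable w) (hw₁ : Integrable fun θ => θ * w θ)
    (hw₂ : Integrable fun θ => θ ^ 2 * w θ) (c : ℝ) :
    ∫ θ, (θ - c) ^ 2 * w θ
      = (∫ θ, θ ^ 2 * w θ) - 2 * c * (∫ θ, θ * w θ) + c ^ 2 * ∫ θ, w θ := by
  have hexpand (θ : ℝ) : (θ - c) ^ 2 * w θ
      = θ ^ 2 * w θ - 2 * c * (θ * w θ) + c ^ 2 * w θ := by ring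
  simp only [hexpand]
  rw [integral_add (by exact hw₂.sub (hw₁.const_mul _)) (hw.const_mul _),
    integral_sub hw₂ (hw₁.const_mul _), integral_const_mul, integral_const_mul]

lemma integral_sub_mean_sq_mul_le (hw : Integrable w) (hw₁ : Integrable fun θ => θ * w θ)
    (hw₂ : Integrable fun θ => θ ^ 2 * w θ) (hpos : 0 < ∫ θ, w θ) (c : ℝ) :
    ∫ θ, (θ - (∫ θ, θ * w θ) / ∫ θ, w θ) ^ 2 * w θ ≤ ∫ θ, (θ - c) ^ 2 * w θ := by
  rw [integral_sub_sq_mul hw hw₁ hw₂, integral_sub_sq_mul hw hw₁ hw₂]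
  set m := (∫ θ, θ * w θ) / ∫ θ, w θ with hm
  rw [← (eq_div_iff hpos.ne').1 hm]
  linarith [mul_nonneg hpos.le (sq_nonneg (m - c))]

end WeightedMean

section NormalLocation

variable {g : ℝ → ℝ}

lemma integrable_phiN_sub_mul (hg : Integrable g) (y : ℝ) :
    Integrable fun θ => phiN (y - θ) * g θ := by
  have := continuous_phiN
  refine hg.bdd_mul (c := 1) (Continuous.aestronglyMeasurable (by fun_prop))
    (Eventually.of_forall fun θ => ?_)
  rw [norm_of_nonneg (phiN_pos _).le]
  exact phiN_le_one _

lemma integrable_sub_sq_mul_phiN_sub_mul (hg : Integrable g) (y c : ℝ) :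
    Integrable fun θ => (θ - c) ^ 2 * (phiN (y - θ) * g θ) := by
  have := continuous_phiN
  simp only [← mul_assoc]
  refine hg.bdd_mul (c := 4 + 2 * (y - c) ^ 2) (Continuous.aestronglyMeasurable (by fun_prop))
    (Eventually.of_forall fun θ => ?_)
  have hφ := phiN_pos (y - θ)
  rw [norm_of_nonneg (by positivity)]
  calc (θ - c) ^ 2 * phiN (y - θ)
      ≤ (2 * (y - θ) ^ 2 + 2 * (y - c) ^ 2) * phiN (y - θ) := by
        gcongr
        linarith [sq_nonneg (y - θ + (y - c))]
    _ = 2 * ((y - θ) ^ 2 * phiN (y - θ)) + 2 * (y - c) ^ 2 * phiN (y - θ) := by ring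
    _ ≤ 2 * 2 + 2 * (y - c) ^ 2 * 1 := by
        gcongr
        · exact sq_mul_phiN_le_two _
        · exact phiN_le_one _
    _ = 4 + 2 * (y - c) ^ 2 := by ring

lemma integrable_mul_phiN_sub_mul (hg : Integrable g) (y : ℝ) :
    Integrable fun θ => θ * (phiN (y - θ) * g θ) := by
  refine (((integrable_sub_sq_mul_phiN_sub_mul hg y (-1)).sub
    (integrable_sub_sq_mul_phiN_sub_mul hg y 1)).div_const 4).congr
    (Eventually.of_forall fun θ => ?_)
  simp only [Pi.sub_apply]
  ring

lemma two_mul_exp_mul_phiN_le (y θ : ℝ) :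
    2 * (exp (-(y ^ 2) / 2) * phiN θ) ≤ phiN (y - θ) + phiN (y + θ) := by
  have hadd (x : ℝ) : phiN (y + x) = exp (-(y ^ 2) / 2) * phiN x * exp (-(y * x)) := by
    simp only [phiN]
    rw [mul_left_comm, mul_assoc, ← exp_add, ← exp_add]
    ring_nf
  have hsub : phiN (y - θ) = exp (-(y ^ 2) / 2) * phiN θ * exp (y * θ) := by
    rw [sub_eq_add_neg, hadd, phiN_neg, mul_neg, neg_neg]
  calc 2 * (exp (-(y ^ 2) / 2) * phiN θ)
      ≤ 2 * (exp (-(y ^ 2) / 2) * phiN θ) * cosh (y * θ) :=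
        le_mul_of_one_le_right (by have := phiN_pos θ; positivity) (one_le_cosh _)
    _ = phiN (y - θ) + phiN (y + θ) := by
        rw [hsub, hadd, cosh_eq]
        ring

lemma exp_mul_integral_phiN_mul_le (hg : Integrable g) (hg₀ : ∀ θ, 0 ≤ g θ)
    (heven : ∀ θ, g (-θ) = g θ) (y : ℝ) :
    exp (-(y ^ 2) / 2) * ∫ θ, phiN θ * g θ ≤ ∫ θ, phiN (y - θ) * g θ := by
  have hreflect : ∫ θ, phiN (y + θ) * g θ = ∫ θ, phiN (y - θ) * g θ := by
    rw [← integral_neg_eq_self]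
    simp only [heven, ← sub_eq_add_neg]
  have hint := integrable_phiN_sub_mul hg y
  have hint_zero : Integrable fun θ => phiN θ * g θ := by
    simpa only [zero_sub, phiN_neg] using integrable_phiN_sub_mul hg 0
  have hint_add : Integrable fun θ => phiN (y + θ) * g θ := by
    simpa only [heven, sub_neg_eq_add] using hint.comp_neg
  have hsum : 2 * (exp (-(y ^ 2) / 2) * ∫ θ, phiN θ * g θ)
      ≤ (∫ θ, phiN (y - θ) * g θ) + ∫ θ, phiN (y + θ) * g θ := by
    rw [← integral_const_mul, ← integral_const_mul, ← integral_add hint hint_add]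
    refine integral_mono ((hint_zero.const_mul _).const_mul _) (hint.add hint_add) fun θ => ?_
    linarith [mul_le_mul_of_nonneg_right (two_mul_exp_mul_phiN_le y θ) (hg₀ θ)]
  linarith

lemma integral_sq_mul_phiN_sub_mul_le {A : ℝ} (hg : Integrable g)
    (hgA : ∀ θ ≠ 0, g θ ≤ A / θ ^ 2) (y : ℝ) :
    ∫ θ, θ ^ 2 * (phiN (y - θ) * g θ) ≤ A := by
  calc ∫ θ, θ ^ 2 * (phiN (y - θ) * g θ) ≤ ∫ θ, A * phiN (y - θ) := by
        refine integral_mono_ae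
          (by simpa only [sub_zero] using integrable_sub_sq_mul_phiN_sub_mul hg y 0)
          ((integrable_phiN.comp_sub_left y).const_mul A) ?_
        filter_upwards [ae_ne_zero] with θ hθ
        have h := (le_div_iff₀ (by positivity)).1 (hgA θ hθ)
        linarith [mul_le_mul_of_nonneg_left h (phiN_pos (y - θ)).le]
    _ = A := by
        rw [integral_const_mul, integral_sub_left_eq_self phiN, integral_phiN, mul_one]

lemma phiN_one_mul_le_integral (hg : Integrable g) (hg₀ : ∀ θ, 0 ≤ g θ)
    (hanti : ∀ θ θ', θ ≠ 0 → |θ| ≤ |θ'| → g θ' ≤ g θ) (y : ℝ) :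
    phiN 1 * g (|y| + 1) ≤ ∫ θ, phiN (y - θ) * g θ := by
  have hint := integrable_phiN_sub_mul hg y
  calc phiN 1 * g (|y| + 1) = ∫ _ in Ioc y (y + 1), phiN 1 * g (|y| + 1) := by simp
    _ ≤ ∫ θ in Ioc y (y + 1), phiN (y - θ) * g θ := by
        refine setIntegral_mono_on_ae (integrableOn_const (by simp)) hint.integrableOn
          measurableSet_Ioc ?_
        filter_upwards [ae_ne_zero] with θ hθ ⟨hyθ, hθy⟩
        have hφ : phiN 1 ≤ phiN (y - θ) := by
          apply phiN_le_of_abs_le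
          rw [abs_one, abs_le]
          constructor <;> linarith
        have hgθ : g (|y| + 1) ≤ g θ := by
          apply hanti θ _ hθ
          rw [abs_of_pos (by positivity : 0 < |y| + 1), abs_le]
          constructor <;> linarith [neg_abs_le y, le_abs_self y]
        exact mul_le_mul hφ hgθ (hg₀ _) (phiN_pos _).le
    _ ≤ ∫ θ, phiN (y - θ) * g θ :=
        setIntegral_le_integral hint
          (Eventually.of_forall fun θ => mul_nonneg (phiN_pos _).le (hg₀ θ))

lemma sub_sq_mul_phiN_sub_mul_le (hg₀ : ∀ θ, 0 ≤ g θ)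
    (hanti : ∀ θ θ', θ ≠ 0 → |θ| ≤ |θ'| → g θ' ≤ g θ) (y θ : ℝ) :
    (θ - y) ^ 2 * (phiN (y - θ) * g θ)
      ≤ (2 * |y| + 1) ^ 2 * (phiN (y - θ) * g θ)
        + g (|y| + 1) * ((y - θ) ^ 2 * phiN (y - θ)) := by
  have hR : 0 < |y| + 1 := by positivity
  have hφ := (phiN_pos (y - θ)).le
  have hgθ := hg₀ θ
  have hgR := hg₀ (|y| + 1)
  rw [sub_sq_comm θ y]
  rcases le_total |θ| (|y| + 1) with hnear | hfar
  · have hsq : (y - θ) ^ 2 ≤ (2 * |y| + 1) ^ 2 := by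
      rw [← sq_abs]
      gcongr
      linarith [abs_sub y θ]
    have := mul_le_mul_of_nonneg_right hsq (mul_nonneg hφ hgθ)
    have : 0 ≤ g (|y| + 1) * ((y - θ) ^ 2 * phiN (y - θ)) := by positivity
    linarith
  · have hle := hanti (|y| + 1) θ hR.ne' (by rwa [abs_of_pos hR])
    have := mul_le_mul_of_nonneg_left hle (mul_nonneg (sq_nonneg (y - θ)) hφ)
    have : 0 ≤ (2 * |y| + 1) ^ 2 * (phiN (y - θ) * g θ) := by positivity
    linarith

lemma integral_sub_sq_mul_phiN_sub_mul_le (hg : Integrable g) (hg₀ : ∀ θ, 0 ≤ g θ)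
    (hanti : ∀ θ θ', θ ≠ 0 → |θ| ≤ |θ'| → g θ' ≤ g θ) (y : ℝ) :
    ∫ θ, (θ - y) ^ 2 * (phiN (y - θ) * g θ)
      ≤ ((2 * |y| + 1) ^ 2 + (phiN 1)⁻¹) * ∫ θ, phiN (y - θ) * g θ := by
  have hint := integrable_phiN_sub_mul hg y
  have hint₂ : Integrable fun θ => (y - θ) ^ 2 * phiN (y - θ) :=
    integrable_sq_mul_phiN.comp_sub_left y
  have hdensity : g (|y| + 1) ≤ (phiN 1)⁻¹ * ∫ θ, phiN (y - θ) * g θ := by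
    rw [← div_eq_inv_mul, le_div_iff₀ (phiN_pos 1), mul_comm]
    exact phiN_one_mul_le_integral hg hg₀ hanti y
  calc ∫ θ, (θ - y) ^ 2 * (phiN (y - θ) * g θ)
      ≤ ∫ θ, ((2 * |y| + 1) ^ 2 * (phiN (y - θ) * g θ)
          + g (|y| + 1) * ((y - θ) ^ 2 * phiN (y - θ))) :=
        integral_mono (integrable_sub_sq_mul_phiN_sub_mul hg y y)
          ((hint.const_mul _).add (hint₂.const_mul _))
          (sub_sq_mul_phiN_sub_mul_le hg₀ hanti y)
    _ = (2 * |y| + 1) ^ 2 * (∫ θ, phiN (y - θ) * g θ) + g (|y| + 1) := by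
        rw [integral_add (hint.const_mul _) (hint₂.const_mul _), integral_const_mul,
          integral_const_mul, integral_sub_left_eq_self (fun x => x ^ 2 * phiN x),
          integral_sq_mul_phiN, mul_one]
    _ ≤ ((2 * |y| + 1) ^ 2 + (phiN 1)⁻¹) * ∫ θ, phiN (y - θ) * g θ := by
        rw [add_mul]
        gcongr

end NormalLocation

section Posterior

variable {t s r : ℝ}

lemma postDens_nonneg (ht : 0 < t) (y θ : ℝ) : 0 ≤ postDens t y θ :=
  mul_nonneg (phiN_pos _).le (gHS_nonneg ht θ)

lemma integrable_postDens (ht : 0 < t) (y : ℝ) : Integrable (postDens t y) :=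
  integrable_phiN_sub_mul (integrable_gHS ht) y

lemma integrable_sub_sq_mul_postDens (ht : 0 < t) (y c : ℝ) :
    Integrable fun θ => (θ - c) ^ 2 * postDens t y θ :=
  integrable_sub_sq_mul_phiN_sub_mul (integrable_gHS ht) y c

lemma margDens_pos (ht : 0 < t) (y : ℝ) : 0 < margDens t y := by
  have hsupp : {0}ᶜ ⊆ Function.support (postDens t y) := fun θ hθ =>
    (mul_pos (phiN_pos _) (gHS_pos ht hθ)).ne'
  rw [margDens, integral_pos_iff_support_of_nonneg (postDens_nonneg ht y)
    (integrable_postDens ht y)]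
  refine lt_of_lt_of_le ?_ (measure_mono hsupp)
  simp [measure_compl, measure_singleton]

lemma margDens_zero_eq_integral_phiN_mul (ht : 0 < t) :
    margDens t 0 = ∫ u, phiN (t * u) * gHS 1 u := by
  have hscale (θ : ℝ) : postDens t 0 θ = t⁻¹ * (phiN (t * (θ / t)) * gHS 1 (θ / t)) := by
    rw [postDens, zero_sub, phiN_neg, gHS_eq_inv_mul_gHS_one, mul_div_cancel₀ _ ht.ne']
    ring
  simp only [margDens, hscale]
  rw [integral_const_mul, Measure.integral_comp_div (fun u => phiN (t * u) * gHS 1 u),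
    abs_of_pos ht, smul_eq_mul, inv_mul_cancel_left₀ ht.ne']

lemma margDens_one_zero_le (ht : 0 < t) (ht₁ : t ≤ 1) : margDens 1 0 ≤ margDens t 0 := by
  have hint {u : ℝ} : Integrable fun x => phiN (u * x) * gHS 1 x := by
    have := continuous_phiN
    refine (integrable_gHS one_pos).bdd_mul (c := 1)
      (Continuous.aestronglyMeasurable (by fun_prop)) (Eventually.of_forall fun x => ?_)
    rw [norm_of_nonneg (phiN_pos _).le]
    exact phiN_le_one _
  rw [margDens_zero_eq_integral_phiN_mul one_pos, margDens_zero_eq_integral_phiN_mul ht]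
  refine integral_mono hint hint fun u => mul_le_mul_of_nonneg_right
    (phiN_le_of_abs_le ?_) (gHS_nonneg one_pos u)
  rw [one_mul, abs_mul, abs_of_pos ht]
  exact mul_le_of_le_one_left (abs_nonneg u) ht₁

lemma postVar_nonneg (ht : 0 < t) (y : ℝ) : 0 ≤ postVar t y :=
  div_nonneg (integral_nonneg fun θ => mul_nonneg (sq_nonneg _) (postDens_nonneg ht y θ))
    (margDens_pos ht y).le

lemma postVar_le_integral_sub_sq_div (ht : 0 < t) (y c : ℝ) :
    postVar t y ≤ (∫ θ, (θ - c) ^ 2 * postDens t y θ) / margDens t y :=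
  div_le_div_of_nonneg_right
    (integral_sub_mean_sq_mul_le (integrable_postDens ht y)
      (integrable_mul_phiN_sub_mul (integrable_gHS ht) y)
      (by simpa only [sub_zero] using integrable_sub_sq_mul_postDens ht y 0)
      (margDens_pos ht y) c)
    (margDens_pos ht y).le

lemma integral_mul_postDens_le_mul (ht : 0 < t) (hs : 0 < s) (hts : t ≤ r * s)
    (hst : s ≤ r * t) {y : ℝ} {f : ℝ → ℝ} (hf : ∀ θ, 0 ≤ f θ)
    (hft : Integrable fun θ => f θ * postDens t y θ)
    (hfs : Integrable fun θ => f θ * postDens s y θ) :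
    ∫ θ, f θ * postDens t y θ ≤ r * ∫ θ, f θ * postDens s y θ := by
  rw [← integral_const_mul]
  refine integral_mono_ae hft (hfs.const_mul r) ?_
  filter_upwards [ae_ne_zero] with θ hθ
  have h := mul_le_mul_of_nonneg_left (gHS_le_mul ht hs hts hst hθ)
    (mul_nonneg (hf θ) (phiN_pos (y - θ)).le)
  simp only [postDens]
  linarith

lemma margDens_le_mul (ht : 0 < t) (hs : 0 < s) (hts : t ≤ r * s) (hst : s ≤ r * t) (y : ℝ) :
    margDens t y ≤ r * margDens s y := by
  simpa only [one_mul, margDens] using integral_mul_postDens_le_mul ht hs hts hst (f := fun _ => 1)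
    (fun _ => zero_le_one) (by simpa only [one_mul] using integrable_postDens ht y)
    (by simpa only [one_mul] using integrable_postDens hs y)

lemma postVar_le_sq_mul (ht : 0 < t) (hs : 0 < s) (hts : t ≤ r * s) (hst : s ≤ r * t) (y : ℝ) :
    postVar t y ≤ r ^ 2 * postVar s y := by
  have := margDens_pos ht y
  have hms := margDens_pos hs y
  have hr : 0 < r := pos_of_mul_pos_left (ht.trans_le hts) hs.le
  have hnonneg : 0 ≤ ∫ θ, (θ - postMean s y) ^ 2 * postDens s y θ :=
    integral_nonneg fun θ => mul_nonneg (sq_nonneg _) (postDens_nonneg hs y θ)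
  calc postVar t y ≤ (∫ θ, (θ - postMean s y) ^ 2 * postDens t y θ) / margDens t y :=
        postVar_le_integral_sub_sq_div ht y _
    _ ≤ (r * ∫ θ, (θ - postMean s y) ^ 2 * postDens s y θ) / (margDens s y / r) := by
        gcongr
        · exact integral_mul_postDens_le_mul ht hs hts hst (fun _ => sq_nonneg _)
            (integrable_sub_sq_mul_postDens ht y _) (integrable_sub_sq_mul_postDens hs y _)
        · rw [div_le_iff₀' hr]
          exact margDens_le_mul hs ht hst hts y
    _ = r ^ 2 * postVar s y := by
        rw [postVar]
        field_simp

lemma postVar_le_mul_exp (ht : 0 < t) (ht₁ : t ≤ 1) (y : ℝ) :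
    postVar t y ≤ 2 / margDens 1 0 * t * exp (y ^ 2 / 2) := by
  have hm₁ := margDens_pos one_pos 0
  have hexp : exp (-(y ^ 2) / 2) * margDens t 0 ≤ margDens t y := by
    simpa only [margDens, postDens, zero_sub, phiN_neg] using
      exp_mul_integral_phiN_mul_le (integrable_gHS ht) (gHS_nonneg ht) (gHS_neg t) y
  have hmarg : exp (-(y ^ 2) / 2) * margDens 1 0 ≤ margDens t y :=
    (mul_le_mul_of_nonneg_left (margDens_one_zero_le ht ht₁) (exp_pos _).le).trans hexp
  calc postVar t y ≤ (∫ θ, θ ^ 2 * postDens t y θ) / margDens t y := by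
        simpa only [sub_zero] using postVar_le_integral_sub_sq_div ht y 0
    _ ≤ 2 * t / (exp (-(y ^ 2) / 2) * margDens 1 0) := by
        gcongr
        exact integral_sq_mul_phiN_sub_mul_le (integrable_gHS ht)
          (fun θ hθ => gHS_le_div_sq ht hθ) y
    _ = 2 / margDens 1 0 * t * exp (y ^ 2 / 2) := by
        rw [neg_div, exp_neg]
        field_simp

lemma postVar_le_mul_one_add_sq (ht : 0 < t) (y : ℝ) :
    postVar t y ≤ (8 + (phiN 1)⁻¹) * (1 + y ^ 2) := by
  have hφ := inv_pos.2 (phiN_pos 1)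
  calc postVar t y ≤ (∫ θ, (θ - y) ^ 2 * postDens t y θ) / margDens t y :=
        postVar_le_integral_sub_sq_div ht y y
    _ ≤ (2 * |y| + 1) ^ 2 + (phiN 1)⁻¹ := by
        rw [div_le_iff₀ (margDens_pos ht y)]
        exact integral_sub_sq_mul_phiN_sub_mul_le (integrable_gHS ht) (gHS_nonneg ht)
          (fun _ _ hθ h => gHS_le_of_abs_le ht hθ h) y
    _ ≤ (8 + (phiN 1)⁻¹) * (1 + y ^ 2) := by
        nlinarith [sq_abs y, sq_nonneg (|y| - 1), mul_nonneg hφ.le (sq_nonneg y)]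

lemma measurable_postVar (ht : 0 < t) : Measurable (postVar t) := by
  have hdens : Measurable fun x : ℝ × ℝ => postDens t x.1 x.2 := by
    have := continuous_phiN.measurable
    have := measurable_gHS ht
    unfold postDens
    fun_prop
  have hmarg : Measurable (margDens t) :=
    hdens.stronglyMeasurable.integral_prod_right.measurable
  have hmean : Measurable (postMean t) := by
    have h : Measurable fun x : ℝ × ℝ => x.2 * postDens t x.1 x.2 := by fun_prop
    exact h.stronglyMeasurable.integral_prod_right.measurable.div hmarg
  have hvar : Measurable fun x : ℝ × ℝ =>
      (x.2 - postMean t x.1) ^ 2 * postDens t x.1 x.2 := by fun_prop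
  exact hvar.stronglyMeasurable.integral_prod_right.measurable.div hmarg

lemma memLp_postVar (ht : 0 < t) : MemLp (postVar t) 2 (gaussianReal 0 1) := by
  have hfour : Integrable (fun y : ℝ => (y ^ 2) ^ 2) (gaussianReal 0 1) := by
    have h : MemLp id ((4 : ℕ) : ℝ≥0∞) (gaussianReal 0 1) :=
      memLp_id_gaussianReal' _ (ENNReal.natCast_ne_top 4)
    refine (h.integrable_norm_pow four_ne_zero).congr (Eventually.of_forall fun y => ?_)
    simp only [id_eq, norm_eq_abs, ← pow_mul]
    exact Even.pow_abs (by decide) y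
  have hsq : MemLp (fun y : ℝ => y ^ 2) 2 (gaussianReal 0 1) :=
    (memLp_two_iff_integrable_sq (by fun_prop)).2 hfour
  have hbound : MemLp (fun y : ℝ => (8 + (phiN 1)⁻¹) * (1 + y ^ 2)) 2 (gaussianReal 0 1) :=
    ((memLp_const (1 : ℝ)).add hsq).const_mul _
  refine hbound.mono (measurable_postVar ht).aestronglyMeasurable
    (Eventually.of_forall fun y => ?_)
  rw [norm_of_nonneg (postVar_nonneg ht y)]
  exact (postVar_le_mul_one_add_sq ht y).trans (le_abs_self _)

end Posterior

section RadialBound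

variable {f p q w : ℝ → ℝ} {T : ℝ}

lemma integrable_comp_abs (hf : IntegrableOn f (Ioi 0)) : Integrable fun x => f |x| := by
  have hind : Integrable ((Ioi 0).indicator f) := hf.integrable_indicator measurableSet_Ioi
  refine (hind.add hind.comp_neg).congr ?_
  filter_upwards [ae_ne_zero] with x hx
  rcases hx.lt_or_gt with hx | hx
  · simp [abs_of_neg, hx, hx.le]
  · simp [abs_of_pos, hx, hx.le]

lemma integral_le_of_le_abs (hT : 0 < T) (hw : ∀ x, 0 ≤ w x)
    (hwp : ∀ x, |x| ≤ T → w x ≤ p |x|) (hwq : ∀ x, T < |x| → w x ≤ q |x|)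
    (hp : IntegrableOn p (Ioc 0 T)) (hq : IntegrableOn q (Ioi T)) :
    ∫ x, w x ≤ 2 * ((∫ x in Ioc 0 T, p x) + ∫ x in Ioi T, q x) := by
  classical
  have hinner : (volume.restrict (Ioi 0)).restrict (Iic T) = volume.restrict (Ioc 0 T) := by
    rw [Measure.restrict_restrict measurableSet_Iic, inter_comm, Ioi_inter_Iic]
  have houter : (volume.restrict (Ioi 0)).restrict (Iic T)ᶜ = volume.restrict (Ioi T) := by
    rw [Measure.restrict_restrict measurableSet_Iic.compl, compl_Iic, Ioi_inter_Ioi,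
      max_eq_left hT.le]
  have hp' : IntegrableOn p (Iic T) (volume.restrict (Ioi 0)) := by rwa [IntegrableOn, hinner]
  have hq' : IntegrableOn q (Iic T)ᶜ (volume.restrict (Ioi 0)) := by rwa [IntegrableOn, houter]
  have hwpq (x : ℝ) : w x ≤ (Iic T).piecewise p q |x| := by
    by_cases hx : |x| ≤ T
    · rw [piecewise_eq_of_mem _ _ _ (mem_Iic.2 hx)]
      exact hwp x hx
    · rw [piecewise_eq_of_notMem _ _ _ (by simpa only [mem_Iic] using hx)]
      exact hwq x (not_le.1 hx)
  calc ∫ x, w x ≤ ∫ x, (Iic T).piecewise p q |x| :=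
        integral_mono_of_nonneg (Eventually.of_forall hw)
          (integrable_comp_abs (Integrable.piecewise measurableSet_Iic hp' hq'))
          (Eventually.of_forall hwpq)
    _ = 2 * ((∫ x in Ioc 0 T, p x) + ∫ x in Ioi T, q x) := by
        rw [integral_comp_abs, integral_piecewise measurableSet_Iic hp' hq', hinner, houter]

end RadialBound

section GaussianMoments

variable {v : ℝ → ℝ} {A K T : ℝ}

lemma hasDerivAt_exp_neg_sq_div_two (x : ℝ) :
    HasDerivAt (fun x : ℝ => exp (-(x ^ 2) / 2)) (-x * exp (-(x ^ 2) / 2)) x := by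
  have h : HasDerivAt (fun x : ℝ => -(x ^ 2) / 2) (-x) x :=
    ((hasDerivAt_pow 2 x).fun_neg.div_const 2).congr_deriv (by norm_num; ring)
  exact h.exp.congr_deriv (by ring)

lemma tendsto_pow_mul_exp_neg_sq_div_two (k : ℕ) :
    Tendsto (fun x : ℝ => x ^ k * exp (-(x ^ 2) / 2)) atTop (nhds 0) := by
  refine squeeze_zero' ?_ ?_ (tendsto_pow_mul_exp_neg_atTop_nhds_zero k)
  · filter_upwards [eventually_ge_atTop 0] with x hx
    positivity
  · filter_upwards [eventually_ge_atTop 2] with x hx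
    gcongr
    nlinarith

lemma mul_pow_pred_le_half_mul_pow_succ {k : ℕ} {x : ℝ} (hx : 0 ≤ x) (hk : 2 * k ≤ x ^ 2) :
    k * x ^ (k - 1) ≤ x ^ (k + 1) / 2 := by
  rcases k with _ | k
  · simp only [CharP.cast_eq_zero, zero_mul]
    positivity
  · rw [Nat.add_sub_cancel, show x ^ (k + 1 + 1) = x ^ 2 * x ^ k by ring]
    linarith [mul_le_mul_of_nonneg_right hk (pow_nonneg hx k)]

lemma integrableOn_pow_mul_exp_and_integral_le {k : ℕ} (hT : 0 < T) (hk : 2 * k ≤ T ^ 2) :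
    IntegrableOn (fun x => x ^ (k + 1) * exp (-(x ^ 2) / 2)) (Ioi T) ∧
      ∫ x in Ioi T, x ^ (k + 1) * exp (-(x ^ 2) / 2) ≤ 2 * T ^ k * exp (-(T ^ 2) / 2) := by
  set F' : ℝ → ℝ := fun x => (2 * x ^ (k + 1) - 2 * (k * x ^ (k - 1))) * exp (-(x ^ 2) / 2)
  have hderiv : ∀ x ∈ Ioi T, HasDerivAt (fun x => -2 * (x ^ k * exp (-(x ^ 2) / 2))) (F' x) x :=
    fun x _ => (((hasDerivAt_pow k x).fun_mul (hasDerivAt_exp_neg_sq_div_two x)).const_mul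
      (-2)).congr_deriv (by ring)
  have hle : ∀ x ∈ Ioi T, x ^ (k + 1) * exp (-(x ^ 2) / 2) ≤ F' x := fun x (hx : T < x) => by
    have := mul_pow_pred_le_half_mul_pow_succ (hT.trans hx).le
      (hk.trans (pow_le_pow_left₀ hT.le hx.le 2))
    simp only [F']
    gcongr
    linarith
  have hnonneg : ∀ x ∈ Ioi T, 0 ≤ x ^ (k + 1) * exp (-(x ^ 2) / 2) := fun x (hx : T < x) => by
    have := hT.trans hx
    positivity
  have hF' : ∀ x ∈ Ioi T, 0 ≤ F' x := fun x hx => (hnonneg x hx).trans (hle x hx)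
  have hcont : ContinuousWithinAt (fun x => -2 * (x ^ k * exp (-(x ^ 2) / 2))) (Ici T) T :=
    Continuous.continuousWithinAt (by fun_prop)
  have hlim : Tendsto (fun x => -2 * (x ^ k * exp (-(x ^ 2) / 2))) atTop (nhds 0) := by
    simpa only [mul_zero] using (tendsto_pow_mul_exp_neg_sq_div_two k).const_mul (-2)
  have hint := integrableOn_Ioi_deriv_of_nonneg hcont hderiv hF' hlim
  have hint' : IntegrableOn (fun x => x ^ (k + 1) * exp (-(x ^ 2) / 2)) (Ioi T) := by
    refine hint.mono' (Continuous.aestronglyMeasurable (by fun_prop)) ?_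
    filter_upwards [ae_restrict_mem measurableSet_Ioi] with x hx
    rw [norm_of_nonneg (hnonneg x hx)]
    exact hle x hx
  refine ⟨hint', (setIntegral_mono_on hint' hint measurableSet_Ioi hle).trans_eq ?_⟩
  rw [integral_Ioi_of_hasDerivAt_of_nonneg hcont hderiv hF' hlim]
  ring

lemma integral_Ioc_exp_half_mul_le (hT : 0 < T) :
    ∫ x in Ioc 0 T, exp (T / 2 * x) ≤ 2 / T * exp (T ^ 2 / 2) := by
  have hval : ∫ x in Ioc 0 T, exp (T / 2 * x) = 2 / T * (exp (T ^ 2 / 2) - 1) := by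
    rw [← intervalIntegral.integral_of_le hT.le,
      intervalIntegral.integral_comp_mul_left (fun x => exp x) (by positivity), integral_exp,
      mul_zero, exp_zero, smul_eq_mul, inv_div]
    ring_nf
  rw [hval]
  gcongr
  linarith

lemma phiN_mul_pow_succ_le_of_le_mul_exp {u x : ℝ} (hu : 0 ≤ u) (huA : u ≤ A * exp (x ^ 2 / 2))
    (k : ℕ) : phiN x * u ^ (k + 1) ≤ A ^ (k + 1) * exp (k * (x ^ 2 / 2)) := by
  calc phiN x * u ^ (k + 1) ≤ exp (-(x ^ 2) / 2) * (A * exp (x ^ 2 / 2)) ^ (k + 1) :=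
        mul_le_mul (phiN_le_exp x) (pow_le_pow_left₀ hu huA _) (pow_nonneg hu _) (exp_pos _).le
    _ = A ^ (k + 1) * exp (k * (x ^ 2 / 2)) := by
        rw [mul_pow, mul_left_comm, ← exp_nat_mul, ← exp_add]
        push_cast
        ring_nf

lemma phiN_mul_pow_le_of_le_mul_one_add_sq {u x : ℝ} (hK : 0 ≤ K) (hu : 0 ≤ u)
    (huK : u ≤ K * (1 + x ^ 2)) (hx : 1 ≤ x ^ 2) (k : ℕ) :
    phiN x * u ^ k ≤ (2 * K) ^ k * (|x| ^ (2 * k) * exp (-(|x| ^ 2) / 2)) := by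
  calc phiN x * u ^ k ≤ exp (-(x ^ 2) / 2) * (K * (2 * x ^ 2)) ^ k := by
        gcongr
        · exact phiN_le_exp x
        · exact huK.trans (by gcongr; linarith)
    _ = (2 * K) ^ k * (|x| ^ (2 * k) * exp (-(|x| ^ 2) / 2)) := by
        rw [pow_mul, sq_abs, mul_left_comm K, ← mul_assoc, mul_pow]
        ring

lemma integral_gaussianReal_le (hT : 0 < T) (hT₂ : 2 ≤ T ^ 2) (hv : ∀ y, 0 ≤ v y)
    (hvA : ∀ y, v y ≤ A * exp (y ^ 2 / 2)) (hvK : ∀ y, v y ≤ K * (1 + y ^ 2)) :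
    ∫ y, v y ∂gaussianReal 0 1 ≤ 2 * A * T + 8 * K * T * exp (-(T ^ 2) / 2) := by
  have hK : 0 ≤ K := by simpa using (hv 0).trans (hvK 0)
  obtain ⟨hint, hle⟩ := integrableOn_pow_mul_exp_and_integral_le (k := 1) hT
    (by rwa [Nat.cast_one, mul_one])
  have hinner (x : ℝ) : phiN x * v x ≤ A := by
    simpa using phiN_mul_pow_succ_le_of_le_mul_exp (hv x) (hvA x) 0
  have houter (x : ℝ) (hx : T < |x|) :
      phiN x * v x ≤ 2 * K * (|x| ^ (1 + 1) * exp (-(|x| ^ 2) / 2)) := by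
    have hx₁ : 1 ≤ x ^ 2 := by
      rw [← sq_abs]
      nlinarith
    simpa only [pow_one] using
      phiN_mul_pow_le_of_le_mul_one_add_sq hK (hv x) (hvK x) hx₁ 1
  rw [integral_gaussianReal_eq_integral_phiN_mul]
  calc ∫ x, phiN x * v x
      ≤ 2 * ((∫ _ in Ioc 0 T, A)
          + ∫ x in Ioi T, 2 * K * (x ^ (1 + 1) * exp (-(x ^ 2) / 2))) :=
        integral_le_of_le_abs hT (fun x => mul_nonneg (phiN_pos x).le (hv x))
          (fun x _ => hinner x) houter (integrableOn_const (by simp)) (hint.const_mul _)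
    _ ≤ 2 * (T * A + 2 * K * (2 * T ^ 1 * exp (-(T ^ 2) / 2))) := by
        rw [integral_const_mul]
        gcongr
        simp [hT.le]
    _ = 2 * A * T + 8 * K * T * exp (-(T ^ 2) / 2) := by ring

/- On `[-T, T]`, `φ v²` is at most `A² e^{x²/2} ≤ A² e^{T|x|/2}`. -/
lemma integral_sq_gaussianReal_le (hT : 0 < T) (hT₆ : 6 ≤ T ^ 2) (hv : ∀ y, 0 ≤ v y)
    (hvA : ∀ y, v y ≤ A * exp (y ^ 2 / 2)) (hvK : ∀ y, v y ≤ K * (1 + y ^ 2)) :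
    ∫ y, v y ^ 2 ∂gaussianReal 0 1
      ≤ 4 * A ^ 2 / T * exp (T ^ 2 / 2) + 16 * K ^ 2 * T ^ 3 * exp (-(T ^ 2) / 2) := by
  have hK : 0 ≤ K := by simpa using (hv 0).trans (hvK 0)
  obtain ⟨hint, hle⟩ := integrableOn_pow_mul_exp_and_integral_le (k := 3) hT
    (by norm_num; exact hT₆)
  have hinner (x : ℝ) (hx : |x| ≤ T) : phiN x * v x ^ 2 ≤ A ^ 2 * exp (T / 2 * |x|) := by
    calc phiN x * v x ^ 2 ≤ A ^ 2 * exp (x ^ 2 / 2) := by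
          simpa using phiN_mul_pow_succ_le_of_le_mul_exp (hv x) (hvA x) 1
      _ ≤ A ^ 2 * exp (T / 2 * |x|) := by
          gcongr
          nlinarith [sq_abs x, abs_nonneg x]
  have houter (x : ℝ) (hx : T < |x|) :
      phiN x * v x ^ 2 ≤ (2 * K) ^ 2 * (|x| ^ (3 + 1) * exp (-(|x| ^ 2) / 2)) := by
    have hx₁ : 1 ≤ x ^ 2 := by
      rw [← sq_abs]
      nlinarith
    exact phiN_mul_pow_le_of_le_mul_one_add_sq hK (hv x) (hvK x) hx₁ 2
  rw [integral_gaussianReal_eq_integral_phiN_mul]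
  calc ∫ x, phiN x * v x ^ 2
      ≤ 2 * ((∫ x in Ioc 0 T, A ^ 2 * exp (T / 2 * x))
          + ∫ x in Ioi T, (2 * K) ^ 2 * (x ^ (3 + 1) * exp (-(x ^ 2) / 2))) :=
        integral_le_of_le_abs hT (fun x => mul_nonneg (phiN_pos x).le (sq_nonneg _)) hinner
          houter (Continuous.integrableOn_Ioc (by fun_prop)) (hint.const_mul _)
    _ ≤ 2 * (A ^ 2 * (2 / T * exp (T ^ 2 / 2))
          + (2 * K) ^ 2 * (2 * T ^ 3 * exp (-(T ^ 2) / 2))) := by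
        rw [integral_const_mul, integral_const_mul]
        gcongr
        exact integral_Ioc_exp_half_mul_le hT
    _ = 4 * A ^ 2 / T * exp (T ^ 2 / 2) + 16 * K ^ 2 * T ^ 3 * exp (-(T ^ 2) / 2) := by ring

end GaussianMoments

section MomentBounds

variable {v : ℝ → ℝ} {A K τ : ℝ}

lemma exp_zet_sq_div_two (hτ : 0 < τ) (hτ₁ : τ ≤ 1) : exp (zet τ ^ 2 / 2) = τ⁻¹ := by
  have hlog : 0 ≤ log (1 / τ) := log_nonneg (one_le_one_div hτ hτ₁)
  rw [zet, sq_sqrt (by positivity), mul_div_cancel_left₀ _ two_ne_zero, exp_log (by positivity),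
    one_div]

lemma tendsto_zet_nhdsGT_zero : Tendsto zet (nhdsWithin 0 (Ioi 0)) atTop := by
  have hinv : Tendsto (fun τ : ℝ => 1 / τ) (nhdsWithin 0 (Ioi 0)) atTop := by
    simpa only [one_div] using tendsto_inv_nhdsGT_zero
  exact tendsto_sqrt_atTop.comp
    ((tendsto_log_atTop.comp hinv).const_mul_atTop (by norm_num))

lemma integral_gaussianReal_le_mul_zet (hτ : 0 < τ) (hτ₁ : τ ≤ 1) (hζ : 2 ≤ zet τ)
    (hv : ∀ y, 0 ≤ v y) (hvA : ∀ y, v y ≤ A * τ * exp (y ^ 2 / 2))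
    (hvK : ∀ y, v y ≤ K * (1 + y ^ 2)) :
    ∫ y, v y ∂gaussianReal 0 1 ≤ (2 * A + 8 * K) * (τ * zet τ) := by
  have hexp : exp (-(zet τ ^ 2) / 2) = τ := by
    rw [neg_div, exp_neg, exp_zet_sq_div_two hτ hτ₁, inv_inv]
  calc ∫ y, v y ∂gaussianReal 0 1
      ≤ 2 * (A * τ) * zet τ + 8 * K * zet τ * exp (-(zet τ ^ 2) / 2) :=
        integral_gaussianReal_le (by linarith) (by nlinarith) hv hvA hvK
    _ = (2 * A + 8 * K) * (τ * zet τ) := by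
        rw [hexp]
        ring

/- The split point `T` with `exp (T² / 2) = ζ² / τ` balances the inner and outer contributions. -/
lemma integral_sq_gaussianReal_le_mul_zet (hτ : 0 < τ) (hτ₁ : τ ≤ 1) (hζ : 3 ≤ zet τ)
    (hv : ∀ y, 0 ≤ v y) (hvA : ∀ y, v y ≤ A * τ * exp (y ^ 2 / 2))
    (hvK : ∀ y, v y ≤ K * (1 + y ^ 2)) :
    ∫ y, v y ^ 2 ∂gaussianReal 0 1 ≤ (4 * A ^ 2 + 432 * K ^ 2) * (τ * zet τ) := by
  have hζ₀ : 0 < zet τ := by linarith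
  have hlog : 0 ≤ log (zet τ) := log_nonneg (by linarith)
  set T := √(zet τ ^ 2 + 4 * log (zet τ))
  have hT_sq : T ^ 2 = zet τ ^ 2 + 4 * log (zet τ) := sq_sqrt (by positivity)
  have hζT : zet τ ≤ T := le_sqrt_of_sq_le (by linarith)
  have hTζ : T ≤ 3 * zet τ := by
    refine (sqrt_le_left (by positivity)).2 ?_
    nlinarith [log_le_sub_one_of_pos hζ₀]
  have hT : 0 < T := hζ₀.trans_le hζT
  have hexp : exp (T ^ 2 / 2) = zet τ ^ 2 / τ := by
    rw [hT_sq, show (zet τ ^ 2 + 4 * log (zet τ)) / 2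
      = zet τ ^ 2 / 2 + (log (zet τ) + log (zet τ)) by ring, exp_add, exp_add, exp_log hζ₀,
      exp_zet_sq_div_two hτ hτ₁]
    ring
  have hexp_neg : exp (-(T ^ 2) / 2) = τ / zet τ ^ 2 := by
    rw [neg_div, exp_neg, hexp, inv_div]
  calc ∫ y, v y ^ 2 ∂gaussianReal 0 1
      ≤ 4 * (A * τ) ^ 2 / T * exp (T ^ 2 / 2) + 16 * K ^ 2 * T ^ 3 * exp (-(T ^ 2) / 2) :=
        integral_sq_gaussianReal_le hT (by nlinarith) hv hvA hvK
    _ ≤ 4 * (A * τ) ^ 2 / zet τ * (zet τ ^ 2 / τ)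
          + 16 * K ^ 2 * (3 * zet τ) ^ 3 * (τ / zet τ ^ 2) := by
        rw [hexp, hexp_neg]
        gcongr
    _ = (4 * A ^ 2 + 432 * K ^ 2) * (τ * zet τ) := by
        field_simp
        ring

lemma exists_eventually_integral_postVar_le (b : ℝ) :
    ∃ M, ∀ᶠ τ in nhdsWithin 0 (Ioi 0), ∀ t, 0 < t → t ≤ b * τ →
      ∫ y, postVar t y ∂gaussianReal 0 1 ≤ M * (τ * zet τ) ∧
        ∫ y, postVar t y ^ 2 ∂gaussianReal 0 1 ≤ M * (τ * zet τ) := by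
  set A := 2 / margDens 1 0 * b
  set K := 8 + (phiN 1)⁻¹
  refine ⟨max (2 * A + 8 * K) (4 * A ^ 2 + 432 * K ^ 2), ?_⟩
  have hbτ : ∀ᶠ τ in nhdsWithin (0 : ℝ) (Ioi 0), b * τ < 1 :=
    (Continuous.tendsto' (by fun_prop) 0 0 (mul_zero b)).mono_left nhdsWithin_le_nhds
      |>.eventually_lt_const one_pos
  filter_upwards [hbτ, Ioo_mem_nhdsGT one_pos, tendsto_zet_nhdsGT_zero.eventually_ge_atTop 3]
    with τ hbτ ⟨hτ, hτ₁⟩ hζ t ht htτ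
  have hvA (y : ℝ) : postVar t y ≤ A * τ * exp (y ^ 2 / 2) := by
    have := margDens_pos one_pos 0
    calc postVar t y ≤ 2 / margDens 1 0 * t * exp (y ^ 2 / 2) :=
          postVar_le_mul_exp ht (htτ.trans hbτ.le) y
      _ ≤ 2 / margDens 1 0 * (b * τ) * exp (y ^ 2 / 2) := by gcongr
      _ = A * τ * exp (y ^ 2 / 2) := by rw [← mul_assoc]
  have hv := postVar_nonneg ht
  have hvK := postVar_le_mul_one_add_sq ht
  have : 0 < zet τ := by linarith
  constructor
  · refine (integral_gaussianReal_le_mul_zet hτ hτ₁.le (by linarith) hv hvA hvK).trans ?_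
    gcongr
    exact le_max_left _ _
  · refine (integral_sq_gaussianReal_le_mul_zet hτ hτ₁.le hζ hv hvA hvK).trans ?_
    gcongr
    exact le_max_right _ _

end MomentBounds

section ProductMeasure

variable {Ω ι : Type*} [MeasurableSpace Ω] [Fintype ι] {μ : Measure Ω} [IsProbabilityMeasure μ]
  {v : Ω → ℝ}

lemma integral_pi_sum_eval (hv : Integrable v μ) :
    ∫ ω, ∑ i : ι, v (ω i) ∂Measure.pi (fun _ => μ) = Fintype.card ι * ∫ x, v x ∂μ := by
  rw [integral_finsetSum _ fun i _ => integrable_comp_eval (μ := fun _ : ι => μ) (i := i) hv,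
    Finset.sum_congr rfl fun i _ =>
      integral_comp_eval (μ := fun _ : ι => μ) (i := i) hv.aestronglyMeasurable,
    Finset.sum_const, Finset.card_univ, nsmul_eq_mul]

lemma measure_pi_le_abs_sum_sub_integral_le (hv : MemLp v 2 μ) {c : ℝ} (hc : 0 < c) :
    Measure.pi (fun _ : ι => μ)
        {ω | c ≤ |∑ i, v (ω i) - ∫ ω' : ι → Ω, ∑ i, v (ω' i) ∂Measure.pi (fun _ => μ)|}
      ≤ ENNReal.ofReal (Fintype.card ι * (∫ x, v x ^ 2 ∂μ) / c ^ 2) := by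
  have hsum : MemLp (fun ω : ι → Ω => ∑ i, v (ω i)) 2 (Measure.pi fun _ => μ) :=
    memLp_finsetSum _ fun i _ =>
      hv.comp_measurePreserving (measurePreserving_eval (fun _ : ι => μ) i)
  have hvar : Var[fun ω : ι → Ω => ∑ i, v (ω i); Measure.pi fun _ => μ]
      = Fintype.card ι * Var[v; μ] := by
    simpa [Finset.sum_fn] using variance_sum_pi (μ := fun _ : ι => μ) (X := fun _ => v) fun _ => hv
  refine (meas_ge_le_variance_div_sq hsum hc).trans (ENNReal.ofReal_le_ofReal ?_)
  rw [hvar]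
  gcongr
  exact variance_le_expectation_sq hv.aestronglyMeasurable

end ProductMeasure

section MultiplicativeNet

variable {a b r : ℝ}

lemma exists_finset_multiplicative_net (ha : 0 < a) (hr : 1 < r) :
    ∃ F : Finset ℝ, ↑F ⊆ Icc a b ∧ ∀ t ∈ Icc a b, ∃ s ∈ F, t ≤ r * s ∧ s ≤ r * t := by
  have hnhds : ∀ s ∈ Icc a b, {t | t < r * s ∧ s < r * t} ∈ nhds s := fun s hs => by
    have hs₀ : 0 < s := ha.trans_le hs.1
    have hopen : IsOpen {t | t < r * s ∧ s < r * t} :=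
      (isOpen_lt continuous_id continuous_const).inter
        (isOpen_lt continuous_const (continuous_const_mul r))
    exact hopen.mem_nhds ⟨lt_mul_of_one_lt_left hs₀ hr, lt_mul_of_one_lt_left hs₀ hr⟩
  obtain ⟨F, hF, hcover⟩ := isCompact_Icc.elim_nhds_subcover _ hnhds
  refine ⟨F, hF, fun t ht => ?_⟩
  obtain ⟨s, hs, hts, hst⟩ := mem_iUnion₂.1 (hcover ht)
  exact ⟨s, hs, hts.le, hst.le⟩

lemma exists_card_forall_multiplicative_net (ha : 0 < a) (hr : 1 < r) :
    ∃ k : ℕ, ∀ c, 0 < c → ∃ F : Finset ℝ, F.card ≤ k ∧ ↑F ⊆ Icc (a * c) (b * c) ∧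
      ∀ t ∈ Icc (a * c) (b * c), ∃ s ∈ F, t ≤ r * s ∧ s ≤ r * t := by
  obtain ⟨F, hF, hnet⟩ := exists_finset_multiplicative_net (b := b) ha hr
  refine ⟨F.card, fun c hc => ⟨F.image (· * c), Finset.card_image_le, ?_, fun t ht => ?_⟩⟩
  · rw [Finset.coe_image, image_subset_iff]
    exact fun s hs => ⟨mul_le_mul_of_nonneg_right (hF hs).1 hc.le,
      mul_le_mul_of_nonneg_right (hF hs).2 hc.le⟩
  · obtain ⟨s, hs, hts, hst⟩ :=
      hnet (t / c) ⟨(le_div_iff₀ hc).2 ht.1, (div_le_iff₀ hc).2 ht.2⟩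
    refine ⟨s * c, Finset.mem_image_of_mem _ hs, ?_, ?_⟩
    · rwa [← mul_assoc, ← div_le_iff₀ hc]
    · rwa [← le_div_iff₀ hc, mul_div_assoc]

lemma exists_one_lt_sq_sub_inv_sq_mul_le (M : ℝ) {c : ℝ} (hc : 0 < c) :
    ∃ r : ℝ, 1 < r ∧ r ^ 2 ≤ 2 ∧ (r ^ 2 - (r ^ 2)⁻¹) * M ≤ c := by
  have hsq : Tendsto (fun r : ℝ => r ^ 2) (nhdsWithin 1 (Ioi 1)) (nhds 1) :=
    ((continuous_pow 2).tendsto' 1 1 (one_pow 2)).mono_left nhdsWithin_le_nhds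
  have hgap : Tendsto (fun r : ℝ => (r ^ 2 - (r ^ 2)⁻¹) * M) (nhdsWithin 1 (Ioi 1)) (nhds 0) := by
    simpa using (hsq.sub (hsq.inv₀ one_ne_zero)).mul_const M
  have hev : ∀ᶠ r : ℝ in nhdsWithin 1 (Ioi 1), 1 < r := self_mem_nhdsWithin
  obtain ⟨r, hr, hr₂, hrM⟩ := (hev.and
    ((hsq.eventually_lt_const one_lt_two).and (hgap.eventually_lt_const hc))).exists
  exact ⟨r, hr, hr₂.le, hrM.le⟩

lemma abs_sub_le_of_le_mul {R x x' m m' : ℝ} (hR : 1 ≤ R) (hx : x ≤ R * x') (hx' : x' ≤ R * x)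
    (hm : m ≤ R * m') (hm' : m' ≤ R * m) :
    |x - m| ≤ R * |x' - m'| + (R - R⁻¹) * m' := by
  have hR₀ : 0 < R := by linarith
  have hR_inv : R⁻¹ ≤ R := (inv_le_one_of_one_le₀ hR).trans hR
  have hx_inv : R⁻¹ * x' ≤ x := (inv_mul_le_iff₀ hR₀).2 hx'
  have hm_inv : R⁻¹ * m' ≤ m := (inv_mul_le_iff₀ hR₀).2 hm'
  have hupper : R * (x' - m') ≤ R * |x' - m'| := by
    gcongr
    exact le_abs_self _
  have hlower : -(R * |x' - m'|) ≤ R⁻¹ * (x' - m') := by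
    calc -(R * |x' - m'|) ≤ -(R⁻¹ * |x' - m'|) := by gcongr
      _ = R⁻¹ * -|x' - m'| := by ring
      _ ≤ R⁻¹ * (x' - m') := by
          gcongr
          exact neg_abs_le _
  exact abs_le.2 ⟨by linarith, by linarith⟩

end MultiplicativeNet

section PosteriorRisk

variable {n : ℕ} {s t r a ε M : ℝ} {y : Fin n → ℝ} {F : Finset ℝ} {S : Set ℝ}

/-- The posterior expected squared distance `H_n(t) = ∑ᵢ var(θᵢ | t, Yᵢ)` to the posterior mean. -/
def postRisk (t : ℝ) (y : Fin n → ℝ) : ℝ := ∑ i, postVar t (y i)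

/-- The deviation `|H_n(t) - E₀ H_n(t)|` of the posterior risk from its mean under `θ₀ = 0`. -/
def postRiskDev (t : ℝ) (y : Fin n → ℝ) : ℝ :=
  |postRisk t y - ∫ y', postRisk t y' ∂Pdata (0 : Fin n → ℝ)|

lemma Pdata_zero : Pdata (0 : Fin n → ℝ) = Measure.pi fun _ => gaussianReal 0 1 := rfl

lemma integrable_postVar (ht : 0 < t) : Integrable (postVar t) (gaussianReal 0 1) :=
  (memLp_postVar ht).integrable one_le_two

lemma integral_postRisk (ht : 0 < t) :
    ∫ y, postRisk t y ∂Pdata (0 : Fin n → ℝ) = n * ∫ x, postVar t x ∂gaussianReal 0 1 := by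
  simpa only [Fintype.card_fin, postRisk, Pdata_zero] using
    integral_pi_sum_eval (ι := Fin n) (integrable_postVar ht)

lemma Pdata_le_postRiskDev_le (ht : 0 < t) {c : ℝ} (hc : 0 < c) :
    Pdata (0 : Fin n → ℝ) {y | c ≤ postRiskDev t y}
      ≤ ENNReal.ofReal (n * (∫ x, postVar t x ^ 2 ∂gaussianReal 0 1) / c ^ 2) := by
  simpa only [Fintype.card_fin, postRiskDev, postRisk, Pdata_zero] using
    measure_pi_le_abs_sum_sub_integral_le (ι := Fin n) (memLp_postVar ht) hc

lemma postRisk_le_sq_mul (ht : 0 < t) (hs : 0 < s) (hts : t ≤ r * s) (hst : s ≤ r * t) :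
    postRisk t y ≤ r ^ 2 * postRisk s y := by
  simp only [postRisk, Finset.mul_sum]
  exact Finset.sum_le_sum fun i _ => postVar_le_sq_mul ht hs hts hst (y i)

lemma integral_postVar_le_sq_mul (ht : 0 < t) (hs : 0 < s) (hts : t ≤ r * s) (hst : s ≤ r * t) :
    ∫ x, postVar t x ∂gaussianReal 0 1 ≤ r ^ 2 * ∫ x, postVar s x ∂gaussianReal 0 1 := by
  rw [← integral_const_mul]
  exact integral_mono (integrable_postVar ht) ((integrable_postVar hs).const_mul _)
    (postVar_le_sq_mul ht hs hts hst)

lemma postRiskDev_le (ht : 0 < t) (hs : 0 < s) (hr : 1 ≤ r) (hts : t ≤ r * s)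
    (hst : s ≤ r * t) :
    postRiskDev t y ≤ r ^ 2 * postRiskDev s y
      + (r ^ 2 - (r ^ 2)⁻¹) * (n * ∫ x, postVar s x ∂gaussianReal 0 1) := by
  rw [postRiskDev, postRiskDev, integral_postRisk ht, integral_postRisk hs]
  refine abs_sub_le_of_le_mul (one_le_pow₀ hr) (postRisk_le_sq_mul ht hs hts hst)
    (postRisk_le_sq_mul hs ht hst hts) ?_ ?_
  all_goals
    rw [mul_left_comm]
    gcongr
  · exact integral_postVar_le_sq_mul ht hs hts hst
  · exact integral_postVar_le_sq_mul hs ht hst hts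

lemma exists_mem_le_postRiskDev (ha : 0 < a) (hε : 0 < ε) (hr : 1 < r) (hr₂ : r ^ 2 ≤ 2)
    (hrM : (r ^ 2 - (r ^ 2)⁻¹) * M ≤ ε / 4) (hF : ∀ s ∈ F, 0 < s)
    (hnet : ∀ t ∈ S, ∃ s ∈ F, t ≤ r * s ∧ s ≤ r * t)
    (hmean : ∀ s ∈ F, n * ∫ x, postVar s x ∂gaussianReal 0 1 ≤ M * a)
    (hy : ε ≤ sSup ((fun t => a⁻¹ * postRiskDev t y) '' S)) :
    ∃ s ∈ F, ε / 8 * a ≤ postRiskDev s y := by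
  by_contra! hsmall
  have hgap : 0 ≤ r ^ 2 - (r ^ 2)⁻¹ := by
    have hr_sq : 1 ≤ r ^ 2 := one_le_pow₀ hr.le
    linarith [inv_le_one_of_one_le₀ hr_sq]
  have hsup : sSup ((fun t => a⁻¹ * postRiskDev t y) '' S) ≤ ε / 2 := by
    refine Real.sSup_le (forall_mem_image.2 fun t htS => ?_) (by positivity)
    obtain ⟨s, hsF, hts, hst⟩ := hnet t htS
    have hs := hF s hsF
    have ht : 0 < t := pos_of_mul_pos_right (hs.trans_le hst) (by linarith)
    rw [inv_mul_le_iff₀ ha]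
    calc postRiskDev t y
        ≤ r ^ 2 * postRiskDev s y
            + (r ^ 2 - (r ^ 2)⁻¹) * (n * ∫ x, postVar s x ∂gaussianReal 0 1) :=
          postRiskDev_le ht hs hr.le hts hst
      _ ≤ 2 * (ε / 8 * a) + (r ^ 2 - (r ^ 2)⁻¹) * (M * a) :=
          add_le_add (mul_le_mul hr₂ (hsmall s hsF).le (abs_nonneg _) zero_le_two)
            (mul_le_mul_of_nonneg_left (hmean s hsF) hgap)
      _ ≤ 2 * (ε / 8 * a) + ε / 4 * a := by
          rw [← mul_assoc _ M]
          gcongr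
      _ = a * (ε / 2) := by ring
  linarith

lemma Pdata_le_sSup_postRiskDev_le (ha : 0 < a) (hε : 0 < ε) (hr : 1 < r) (hr₂ : r ^ 2 ≤ 2)
    (hrM : (r ^ 2 - (r ^ 2)⁻¹) * M ≤ ε / 4) (hF : ∀ s ∈ F, 0 < s)
    (hnet : ∀ t ∈ S, ∃ s ∈ F, t ≤ r * s ∧ s ≤ r * t)
    (hmean : ∀ s ∈ F, n * ∫ x, postVar s x ∂gaussianReal 0 1 ≤ M * a)
    (hsq : ∀ s ∈ F, n * ∫ x, postVar s x ^ 2 ∂gaussianReal 0 1 ≤ M * a) :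
    Pdata (0 : Fin n → ℝ) {y | ε ≤ sSup ((fun t => a⁻¹ * postRiskDev t y) '' S)}
      ≤ F.card * ENNReal.ofReal (64 * M / ε ^ 2 * a⁻¹) := by
  have hsub : {y : Fin n → ℝ | ε ≤ sSup ((fun t => a⁻¹ * postRiskDev t y) '' S)}
      ⊆ ⋃ s ∈ F, {y | ε / 8 * a ≤ postRiskDev s y} := fun y hy => by
    simpa only [mem_iUnion₂, Set.mem_ofPred_eq, exists_prop] using
      exists_mem_le_postRiskDev ha hε hr hr₂ hrM hF hnet hmean hy
  have hcheb : ∀ s ∈ F, Pdata (0 : Fin n → ℝ) {y | ε / 8 * a ≤ postRiskDev s y}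
      ≤ ENNReal.ofReal (64 * M / ε ^ 2 * a⁻¹) := fun s hs =>
    (Pdata_le_postRiskDev_le (hF s hs) (by positivity)).trans <| ENNReal.ofReal_le_ofReal <| by
      calc _ ≤ M * a / (ε / 8 * a) ^ 2 := by gcongr ?_ / _; exact hsq s hs
        _ = 64 * M / ε ^ 2 * a⁻¹ := by field_simp; norm_num
  calc _ ≤ ∑ s ∈ F, Pdata (0 : Fin n → ℝ) {y | ε / 8 * a ≤ postRiskDev s y} :=
        (measure_mono hsub).trans (measure_biUnion_finset_le _ _)
    _ ≤ F.card * ENNReal.ofReal (64 * M / ε ^ 2 * a⁻¹) := by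
        simpa only [nsmul_eq_mul] using Finset.sum_le_card_nsmul _ _ _ hcheb

end PosteriorRisk

section Uniformity

variable {a b ε : ℝ}

lemma exists_eventually_Pdata_le_sSup_postRiskDev_le (ha : 0 < a) (hε : 0 < ε) :
    ∃ (k : ℕ) (D : ℝ), ∀ᶠ τ in nhdsWithin 0 (Ioi 0), ∀ n : ℕ, 0 < n * τ * zet τ →
      Pdata (0 : Fin n → ℝ) {y | ε ≤ sSup ((fun t => (n * τ * zet τ)⁻¹ * postRiskDev t y) ''
        Icc (a * τ) (b * τ))} ≤ k * ENNReal.ofReal (D * (n * τ * zet τ)⁻¹) := by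
  obtain ⟨M, hM⟩ := exists_eventually_integral_postVar_le b
  obtain ⟨r, hr, hr₂, hrM⟩ := exists_one_lt_sq_sub_inv_sq_mul_le M (by positivity : 0 < ε / 4)
  obtain ⟨k, hk⟩ := exists_card_forall_multiplicative_net (b := b) ha hr
  refine ⟨k, 64 * M / ε ^ 2, ?_⟩
  filter_upwards [hM, self_mem_nhdsWithin] with τ hMτ (hτ : 0 < τ) n hpos
  obtain ⟨F, hFk, hFsub, hFnet⟩ := hk τ hτ
  have hF : ∀ s ∈ F, 0 < s := fun s hs => (mul_pos ha hτ).trans_le (hFsub hs).1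
  have hmoments : ∀ s ∈ F, n * ∫ x, postVar s x ∂gaussianReal 0 1 ≤ M * (n * τ * zet τ) ∧
      n * ∫ x, postVar s x ^ 2 ∂gaussianReal 0 1 ≤ M * (n * τ * zet τ) := fun s hs => by
    rw [mul_assoc (n : ℝ), mul_left_comm M]
    have hs_le := hMτ s (hF s hs) (hFsub hs).2
    exact ⟨by gcongr; exact hs_le.1, by gcongr; exact hs_le.2⟩
  calc _ ≤ F.card * ENNReal.ofReal (64 * M / ε ^ 2 * (n * τ * zet τ)⁻¹) :=
        Pdata_le_sSup_postRiskDev_le hpos hε hr hr₂ hrM hF hFnet (fun s hs => (hmoments s hs).1)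
          fun s hs => (hmoments s hs).2
    _ ≤ k * ENNReal.ofReal (64 * M / ε ^ 2 * (n * τ * zet τ)⁻¹) := by gcongr

theorem stmt_17_general {ι : Type*} {l : Filter ι} (ha : 0 < a) {N : ι → ℕ} {τ : ι → ℝ}
    (hτ : Tendsto τ l (nhdsWithin 0 (Ioi 0)))
    (hNτ : Tendsto (fun i => (N i : ℝ) * τ i * zet (τ i)) l atTop) (hε : 0 < ε) :
    Tendsto
      (fun i =>
        Pdata (0 : Fin (N i) → ℝ)
          {y | ε ≤ sSup ((fun t => ((N i : ℝ) * τ i * zet (τ i))⁻¹ *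
            |(∑ j, postVar t (y j)) - ∫ y', (∑ j, postVar t (y' j)) ∂Pdata (0 : Fin (N i) → ℝ)|) ''
              Icc (a * τ i) (b * τ i))})
      l (nhds 0) := by
  obtain ⟨k, D, hD⟩ := exists_eventually_Pdata_le_sSup_postRiskDev_le (b := b) ha hε
  have hlim : Tendsto (fun i => k * ENNReal.ofReal (D * ((N i : ℝ) * τ i * zet (τ i))⁻¹)) l
      (nhds 0) := by
    have hinv := ENNReal.tendsto_ofReal (hNτ.inv_tendsto_atTop.const_mul D)
    rw [mul_zero, ENNReal.ofReal_zero] at hinv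
    simpa only [mul_zero, Pi.inv_apply] using
      ENNReal.Tendsto.const_mul hinv (Or.inr (ENNReal.natCast_ne_top k))
  refine tendsto_of_tendsto_of_tendsto_of_le_of_le' tendsto_const_nhds hlim
    (Eventually.of_forall fun _ => zero_le) ?_
  filter_upwards [hτ.eventually hD, hNτ.eventually_gt_atTop 0] with i hDi hpos
  exact hDi (N i) hpos

end Uniformity

lemma tendsto_mul_zet_atTop {τ : ℕ → ℝ} (hτlb : ∀ n : ℕ, 1 / ((n : ℝ) + 1) ≤ τ n)
    (hτ : Tendsto τ atTop (nhdsWithin 0 (Ioi 0))) :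
    Tendsto (fun n => ((n + 1 : ℕ) : ℝ) * τ n * zet (τ n)) atTop atTop := by
  refine tendsto_atTop_mono (fun n => ?_) (tendsto_zet_nhdsGT_zero.comp hτ)
  have hnτ : 1 ≤ ((n + 1 : ℕ) : ℝ) * τ n := by
    rw [Nat.cast_add_one, ← div_le_iff₀' (by positivity)]
    exact hτlb n
  exact le_mul_of_one_le_left (sqrt_nonneg _) hnτ

theorem stmt_17 (C : ℝ) (hC : 0 < C)
    (τ : ℕ → ℝ) (hτlb : ∀ n : ℕ, 1 / ((n : ℝ) + 1) ≤ τ n)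
    (hτ : Tendsto τ atTop (nhds 0)) :
    ∀ ε : ℝ, 0 < ε →
      Tendsto
        (fun n =>
          Pdata (0 : Fin (n + 1) → ℝ)
            {y : Fin (n + 1) → ℝ |
              ε ≤ sSup ((fun t =>
                  ((((n : ℝ) + 1) * τ n * zet (τ n))⁻¹ *
                    |(∑ i, postVar t (y i)) -
                      ∫ y' : Fin (n + 1) → ℝ, (∑ i, postVar t (y' i))
                        ∂(Pdata (0 : Fin (n + 1) → ℝ))|)) ''
                Set.Icc (C⁻¹ * τ n) (C * τ n))})
        atTop (nhds 0) := by
  intro ε hε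
  have hτ₀ : Tendsto τ atTop (nhdsWithin 0 (Ioi 0)) :=
    tendsto_nhdsWithin_iff.2 ⟨hτ, Eventually.of_forall fun n =>
      lt_of_lt_of_le (by positivity) (hτlb n)⟩
  simpa only [Nat.cast_add_one] using
    stmt_17_general (inv_pos.2 hC) hτ₀ (tendsto_mul_zet_atTop hτlb hτ₀) hε

end
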